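/- arXiv:1206.7001 — 3 statements merged into one kernel-verified Lean document; each statement's English description precedes it below -/
import Mathlib

section
/- Let g ≥ 3 and n ≥ 1 be integers. Suppose given rational numbers c_1,…,c_n, and a rational number e(h,P) for every pair (h,P) with 0 ≤ h ≤ g and P ⊆ {1,…,n} such that |P| ≥ 2 if h = 0 and |P^c| ≥ 2 if h = g, satisfying the symmetry e(h,P) = e(g−h,P^c). Assume that: (i) for every i ∈ {1,…,n}: (2g−2)·c_i + Σ_{j≠i} e(0,{i,j}) = 0; (ii) for every P ⊆ {1,…,n} with |P| ≥ 2: (2g−2)·Σ_{i∈P} c_i + (2 − 2g − (n−|P|))·e(0,P) + Σ_{j∉P} e(0,P∪{j}) = 0; (iii) for every pair (h,P) with 1 ≤ h ≤ g−1, P ⊆ {1,…,n}, and (h,P) ≠ (g−1,{1,…,n}): Σ_{i∉P} c_i + (2 − 2(g−h) − (n−|P|))·e(h,P) + Σ_{j∉P} e(h,P∪{j}) = 0. Then c_i = 0 for all i and e(h,P) = 0 for all (h,P). -/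
open Finset

/-!
For `h ≤ g - 2` the relations with the curves `Z_h^P` can be solved by downward induction on `P`,
because `2 - 2(g - h)` is negative: for `1 ≤ h` this gives
`(2(g - h) - 1) e(h,P) = Σ_{i ∉ P} cᵢ`. By symmetry, the values at `h = 1` determine those at
`h = g - 1`, and the relation with the curve `Z_{g-1}^P` for `P` the complement of `{i}` then says
`(2g - 2) cᵢ = 0`. Once `c = 0`, the same downward induction kills `e(h,P)` for all `h ≤ g - 2`,
including `h = 0`, and symmetry covers the rest.
-/

section TestCurvePairing

variable {ι K : Type*} [Fintype ι] [DecidableEq ι] [CommRing K]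

/-- The intersection number of `Σ cᵢ Kᵢ + Σ f(P) δ_h^P` with `Z_h^P` for a fixed `h > 0`. Here
`χ = 2 - 2(g - h)` is the Euler characteristic of the component of genus `g - h`, along which the
node moves. With `c = 0` it is also the intersection number for `h = 0`. -/
def testCurvePairing (χ : K) (c : ι → K) (f : Finset ι → K) (P : Finset ι) : K :=
  ∑ i ∈ Pᶜ, c i + (χ - ((Fintype.card ι : K) - (#P : K))) * f P + ∑ j ∈ Pᶜ, f (insert j P)

theorem testCurvePairing_eq_card_compl (χ : K) (c : ι → K) (f : Finset ι → K) (P : Finset ι) :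
    testCurvePairing χ c f P =
      ∑ i ∈ Pᶜ, c i + (χ - #Pᶜ) * f P + ∑ j ∈ Pᶜ, f (insert j P) := by
  rw [testCurvePairing, card_compl, Nat.cast_sub (card_le_univ P)]

theorem sum_compl_insert (c : ι → K) {P : Finset ι} {j : ι} (hj : j ∉ P) :
    ∑ i ∈ (insert j P)ᶜ, c i = ∑ i ∈ Pᶜ, c i - c j := by
  rw [compl_insert, sum_erase_eq_sub (mem_compl.mpr hj)]

theorem sum_compl_sum_compl_insert (c : ι → K) (P : Finset ι) :
    ∑ j ∈ Pᶜ, ∑ i ∈ (insert j P)ᶜ, c i = (#Pᶜ - 1) * ∑ i ∈ Pᶜ, c i := by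
  rw [sum_congr rfl fun j hj ↦ sum_compl_insert c (mem_compl.mp hj), sum_sub_distrib, sum_const,
    nsmul_eq_mul, sub_one_mul]

variable [NoZeroDivisors K] {χ : K} {c : ι → K} {f : Finset ι → K}

theorem one_sub_mul_eq_sum_compl_of_testCurvePairing (hχ : ∀ k : ℕ, χ ≠ k) (P : Finset ι)
    (hf : ∀ Q, P ⊆ Q → testCurvePairing χ c f Q = 0) :
    (1 - χ) * f P = ∑ i ∈ Pᶜ, c i := by
  induction P using WellFoundedGT.induction with
  | ind P ih =>
    have insert_eq (j : ι) (hj : j ∈ Pᶜ) :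
        (1 - χ) * f (insert j P) = ∑ i ∈ (insert j P)ᶜ, c i :=
      ih _ (ssubset_insert (mem_compl.mp hj)) fun Q hQ ↦ hf Q ((subset_insert j P).trans hQ)
    have sum_insert_eq : (1 - χ) * ∑ j ∈ Pᶜ, f (insert j P) = (#Pᶜ - 1) * ∑ i ∈ Pᶜ, c i := by
      rw [mul_sum, sum_congr rfl insert_eq, sum_compl_sum_compl_insert]
    have pairing_eq := hf P subset_rfl
    rw [testCurvePairing_eq_card_compl] at pairing_eq
    apply mul_left_cancel₀ (sub_ne_zero.mpr (hχ #Pᶜ))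
    linear_combination (1 - χ) * pairing_eq - sum_insert_eq

theorem eq_zero_of_testCurvePairing_zero_coeff (hχ : ∀ k : ℕ, χ ≠ k) {P : Finset ι}
    (hf : ∀ Q, P ⊆ Q → testCurvePairing χ 0 f Q = 0) : f P = 0 := by
  have mul_eq : (1 - χ) * f P = 0 := by
    simpa using one_sub_mul_eq_sum_compl_of_testCurvePairing hχ P hf
  exact (mul_eq_zero.mp mul_eq).resolve_left (sub_ne_zero.mpr (by simpa using (hχ 1).symm))

theorem eq_zero_of_testCurvePairing_compl_singleton {a : K} (ha : a + 1 ≠ 0)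
    (hf : ∀ P, a * f P = ∑ i ∈ P, c i) {i : ι} (hi : testCurvePairing 0 c f {i}ᶜ = 0) :
    c i = 0 := by
  have pairing_eq : c i - f {i}ᶜ + f (insert i {i}ᶜ) = 0 := by
    simpa [testCurvePairing_eq_card_compl, sub_eq_add_neg] using hi
  have insert_eq : a * f (insert i {i}ᶜ) = c i + a * f {i}ᶜ := by
    rw [hf, hf, sum_insert (by simp)]
  have mul_eq : (a + 1) * c i = 0 := by linear_combination a * pairing_eq - insert_eq
  exact (mul_eq_zero.mp mul_eq).resolve_left ha

end TestCurvePairing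

section Vanishing

variable {ι K : Type*} [Fintype ι] [DecidableEq ι] [CommRing K] [CharZero K]

theorem two_sub_two_mul_sub_ne_natCast {g h : ℕ} (hgh : h + 2 ≤ g) (k : ℕ) :
    2 - 2 * ((g : K) - (h : K)) ≠ k := by
  intro heq
  have cast_eq : ((2 + 2 * h : ℕ) : K) = (k + 2 * g : ℕ) := by
    push_cast
    linear_combination heq
  have := Nat.cast_injective cast_eq
  omega

variable [NoZeroDivisors K] {g : ℕ} {c : ι → K} {e : ℕ → Finset ι → K}

theorem coeff_eq_zero_of_testCurvePairing (hg : 3 ≤ g)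
    (hsym : ∀ P, e (g - 1) P = e 1 Pᶜ)
    (hone : ∀ P, testCurvePairing (2 - 2 * ((g : K) - (1 : ℕ))) c (e 1) P = 0)
    (hlast : ∀ i, testCurvePairing 0 c (e (g - 1)) {i}ᶜ = 0) : c = 0 := by
  have hχ := two_sub_two_mul_sub_ne_natCast (K := K) (show 1 + 2 ≤ g from hg)
  have last_eq (P : Finset ι) :
      (1 - (2 - 2 * ((g : K) - (1 : ℕ)))) * e (g - 1) P = ∑ i ∈ P, c i := by
    rw [hsym, one_sub_mul_eq_sum_compl_of_testCurvePairing hχ Pᶜ fun Q _ ↦ hone Q, compl_compl]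
  have coeff_ne_zero : 1 - (2 - 2 * ((g : K) - (1 : ℕ))) + 1 ≠ 0 := by
    intro h
    refine hχ 2 ?_
    push_cast at h ⊢
    linear_combination -h
  exact funext fun i ↦ eq_zero_of_testCurvePairing_compl_singleton coeff_ne_zero last_eq (hlast i)

theorem stmt_7_general (hg : 3 ≤ g)
    (hsym : ∀ h ≤ g, ∀ P : Finset ι, e h P = e (g - h) Pᶜ)
    (h2 : ∀ P : Finset ι, 2 ≤ #P →
      (2 * (g : K) - 2) * ∑ i ∈ P, c i
        + (2 - 2 * (g : K) - ((Fintype.card ι : K) - (#P : K))) * e 0 P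
        + ∑ j ∈ Pᶜ, e 0 (insert j P) = 0)
    (h3 : ∀ (h : ℕ) (P : Finset ι), 1 ≤ h → h ≤ g - 1 → ¬(h = g - 1 ∧ P = univ) →
      ∑ i ∈ Pᶜ, c i
        + (2 - 2 * ((g : K) - (h : K)) - ((Fintype.card ι : K) - (#P : K))) * e h P
        + ∑ j ∈ Pᶜ, e h (insert j P) = 0) :
    (∀ i, c i = 0) ∧
    ∀ (h : ℕ) (P : Finset ι), h ≤ g → (h = 0 → 2 ≤ #P) → (h = g → 2 ≤ #Pᶜ) → e h P = 0 := by
  have hc : c = 0 := by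
    refine coeff_eq_zero_of_testCurvePairing hg (fun P ↦ ?_)
      (fun P ↦ h3 1 P le_rfl (by omega) (by omega)) (fun i ↦ ?_)
    · rw [hsym (g - 1) (by omega), show g - (g - 1) = 1 by omega]
    · simpa [testCurvePairing, Nat.cast_sub (show 1 ≤ g by omega)] using
        h3 (g - 1) {i}ᶜ (by omega) le_rfl (by simp)
  subst hc
  have eq_zero_of_add_two_le {h : ℕ} {P : Finset ι} (hgh : h + 2 ≤ g) (hP : h = 0 → 2 ≤ #P) :
      e h P = 0 := by
    refine eq_zero_of_testCurvePairing_zero_coeff (two_sub_two_mul_sub_ne_natCast hgh)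
      fun Q hPQ ↦ ?_
    rcases h.eq_zero_or_pos with rfl | hpos
    · simpa [testCurvePairing] using h2 Q ((hP rfl).trans (card_le_card hPQ))
    · exact h3 h Q hpos (by omega) (by omega)
  refine ⟨fun _ ↦ rfl, fun h P hle hP hPc ↦ ?_⟩
  by_cases hgh : h + 2 ≤ g
  · exact eq_zero_of_add_two_le hgh hP
  · rw [hsym h hle]
    exact eq_zero_of_add_two_le (by omega) fun _ ↦ hPc (by omega)

end Vanishing

/-- A divisor class `Σ cᵢ Kᵢ + Σ e(h,P) δ_h^P` (with zero `λ₁` and `δ_irr` coefficients)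
pairing to zero with all test curves `Zᵢ` and `Z_h^P` is zero. -/
theorem stmt_7 (g n : ℕ) (hg : 3 ≤ g) (hn : 1 ≤ n)
    (c : Fin n → ℚ) (e : ℕ → Finset (Fin n) → ℚ)
    (hsym : ∀ h ≤ g, ∀ P : Finset (Fin n), e h P = e (g - h) Pᶜ)
    (h1 : ∀ i : Fin n,
      (2*(g:ℚ) - 2) * c i + ∑ j ∈ univ \ {i}, e 0 {i, j} = 0)
    (h2 : ∀ P : Finset (Fin n), 2 ≤ P.card →
      (2*(g:ℚ) - 2) * ∑ i ∈ P, c i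
        + (2 - 2*(g:ℚ) - ((n:ℚ) - (P.card : ℚ))) * e 0 P
        + ∑ j ∈ Pᶜ, e 0 (insert j P) = 0)
    (h3 : ∀ (h : ℕ) (P : Finset (Fin n)), 1 ≤ h → h ≤ g - 1 →
      ¬(h = g - 1 ∧ P = univ) →
      ∑ i ∈ Pᶜ, c i
        + (2 - 2*((g:ℚ) - (h:ℚ)) - ((n:ℚ) - (P.card : ℚ))) * e h P
        + ∑ j ∈ Pᶜ, e h (insert j P) = 0) :
    (∀ i, c i = 0) ∧
    ∀ (h : ℕ) (P : Finset (Fin n)), h ≤ g → (h = 0 → 2 ≤ P.card) →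
      (h = g → 2 ≤ Pᶜ.card) → e h P = 0 :=
  stmt_7_general hg hsym (by simpa only [Fintype.card_fin] using h2)
    (by simpa only [Fintype.card_fin] using h3)
end

section
/- Let g ≥ 3 and n ≥ 1 be integers. Suppose given rational numbers a, b, c_1,…,c_n, and a rational number e(h,P) for every pair (h,P) with 0 ≤ h ≤ g and P ⊆ {1,…,n} such that |P| ≥ 2 if h = 0 and |P^c| ≥ 2 if h = g, satisfying the symmetry e(h,P) = e(g−h,P^c). Assume that: (i) for every i ∈ {1,…,n}: (2g−2)·c_i + Σ_{j≠i} e(0,{i,j}) = 0; (ii) for every P ⊆ {1,…,n} with |P| ≥ 2: (2g−2)·Σ_{i∈P} c_i + (2 − 2g − (n−|P|))·e(0,P) + Σ_{j∉P} e(0,P∪{j}) = 0; (iii) for every pair (h,P) with 1 ≤ h ≤ g−1, P ⊆ {1,…,n}, and (h,P) ≠ (g−1,{1,…,n}): Σ_{i∉P} c_i + (2 − 2(g−h) − (n−|P|))·e(h,P) + Σ_{j∉P} e(h,P∪{j}) = 0; (iv) a/24 + b/2 − e(1,∅)/24 = 0; (v) e(1,∅) − b = 0. Then a = 0, b = 0,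 c_i = 0 for all i, and e(h,P) = 0 for all (h,P). -/
open Finset

/-!
Put `t = 2g - 2`. The relations coming from `Z_h^P` determine `e(h, P)` from the values at the sets
`P ∪ {j}`, since the coefficient of `e(h, P)` does not vanish; so they can be solved downwards from
`P = {1, …, n}`. In genus `0` the solution is `(t + 1) e(0, P) = t ∑_{i ∈ P} c_i + ∑_i c_i`.
The relation of `Z_i` is the one of `Z_0^P` at `P = {i}` with `e(0, {i})` read as `0`, so the same
formula gives `t c_i + ∑_j c_j = 0` for every `i`. Summing over `i` yields `∑_j c_j = 0`, whence all
`c_i` and all `e(0, P)` vanish. The relations in genus `1 ≤ h ≤ g / 2` are then homogeneous, and the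
symmetry `e(h, P) = e(g - h, Pᶜ)` reaches the remaining genera.
-/

section Recursion

variable {ι R : Type*} [Fintype ι]

theorem eq_zero_of_mul_add_sum_eq_zero [CommRing R] [NoZeroDivisors R]
    {t : R} {c : ι → R} (ht : t ≠ 0) (htι : t + Fintype.card ι ≠ 0)
    (hc : ∀ i, t * c i + ∑ j, c j = 0) (i : ι) : c i = 0 := by
  have hsum : (t + Fintype.card ι) * ∑ j, c j = 0 := calc
    (t + Fintype.card ι) * ∑ j, c j = ∑ i, (t * c i + ∑ j, c j) := by
      rw [sum_add_distrib, ← mul_sum, sum_const, card_univ, nsmul_eq_mul, add_mul]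
    _ = 0 := sum_eq_zero fun i _ => hc i
  have hci := hc i
  rw [(mul_eq_zero_iff_left htι).mp hsum, add_zero] at hci
  exact (mul_eq_zero_iff_left ht).mp hci

variable [DecidableEq ι]

theorem cast_card_compl [AddGroupWithOne R] (P : Finset ι) :
    (#Pᶜ : R) = Fintype.card ι - #P := by
  rw [card_compl, Nat.cast_sub (card_le_univ P)]

theorem eq_zero_of_mul_eq_sum_insert [Semiring R] [NoZeroDivisors R] {s : Set (Finset ι)}
    (hs : IsUpperSet s) {w f : Finset ι → R} (hw : ∀ P ∈ s, w P ≠ 0)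
    (hf : ∀ P ∈ s, w P * f P = ∑ j ∈ Pᶜ, f (insert j P)) : ∀ P ∈ s, f P = 0 := by
  intro P
  induction P using WellFoundedGT.induction with
  | ind P ih =>
    intro hP
    have hsum : ∑ j ∈ Pᶜ, f (insert j P) = 0 := sum_eq_zero fun j hj =>
      ih _ (ssubset_insert (mem_compl.mp hj)) (hs (subset_insert j P) hP)
    exact (mul_eq_zero_iff_left (hw P hP)).mp ((hf P hP).trans hsum)

variable [CommRing R] [NoZeroDivisors R] {t : R} {c : ι → R} {f : Finset ι → R}

theorem add_one_mul_eq_of_sum_insert {s : Set (Finset ι)} (hs : IsUpperSet s)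
    (ht : ∀ k : ℕ, t + k ≠ 0)
    (hf : ∀ P ∈ s, t * ∑ i ∈ P, c i - (t + #Pᶜ) * f P + ∑ j ∈ Pᶜ, f (insert j P) = 0) :
    ∀ P ∈ s, (t + 1) * f P = t * ∑ i ∈ P, c i + ∑ i, c i := by
  set F : Finset ι → R := fun P => t * ∑ i ∈ P, c i + ∑ i, c i with hF
  have F_insert (P : Finset ι) : ∑ j ∈ Pᶜ, F (insert j P) = #Pᶜ * F P + t * ∑ j ∈ Pᶜ, c j := by
    have hj : ∀ j ∈ Pᶜ, F (insert j P) = F P + t * c j := fun j hj => by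
      simp only [hF, sum_insert (mem_compl.mp hj)]
      ring
    rw [sum_congr rfl hj, sum_add_distrib, sum_const, nsmul_eq_mul, mul_sum]
  have hdiff : ∀ P ∈ s, (t + #Pᶜ) * ((t + 1) * f P - F P)
      = ∑ j ∈ Pᶜ, ((t + 1) * f (insert j P) - F (insert j P)) := fun P hP => by
    rw [sum_sub_distrib, ← mul_sum, F_insert]
    linear_combination (-(t + 1)) * hf P hP + t * sum_add_sum_compl P c
  exact fun P hP => sub_eq_zero.mp
    (eq_zero_of_mul_eq_sum_insert hs (fun P _ => ht #Pᶜ) hdiff P hP)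

theorem eq_zero_of_sum_pair_of_sum_insert (ht : ∀ k : ℕ, t + k ≠ 0)
    (hpair : ∀ i, t * c i + ∑ j ∈ univ \ {i}, f {i, j} = 0)
    (hinsert : ∀ P : Finset ι, 2 ≤ #P →
      t * ∑ i ∈ P, c i - (t + #Pᶜ) * f P + ∑ j ∈ Pᶜ, f (insert j P) = 0) :
    (∀ i, c i = 0) ∧ ∀ P : Finset ι, 2 ≤ #P → f P = 0 := by
  -- Setting `f` to zero on singletons turns `hpair` into the recursion at `P = {i}`.
  let f₀ : Finset ι → R := fun P => if 2 ≤ #P then f P else 0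
  have f₀_of_two_le {P : Finset ι} (hP : 2 ≤ #P) : f₀ P = f P := if_pos hP
  have f₀_singleton (i : ι) : f₀ {i} = 0 := if_neg (by simp)
  have hrec : ∀ P ∈ {P : Finset ι | P.Nonempty},
      t * ∑ i ∈ P, c i - (t + #Pᶜ) * f₀ P + ∑ j ∈ Pᶜ, f₀ (insert j P) = 0 := by
    intro P (hP : P.Nonempty)
    have hsum : ∑ j ∈ Pᶜ, f₀ (insert j P) = ∑ j ∈ Pᶜ, f (insert j P) :=
      sum_congr rfl fun j hj => f₀_of_two_le <| by
        rw [card_insert_of_notMem (mem_compl.mp hj)]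
        exact Nat.succ_le_succ hP.card_pos
    rw [hsum]
    obtain ⟨i, rfl⟩ | hP' := hP.exists_eq_singleton_or_nontrivial
    · rw [f₀_singleton, sum_singleton, mul_zero, sub_zero, compl_eq_univ_sdiff]
      simpa only [pair_comm i] using hpair i
    · have hcard : 2 ≤ #P := one_lt_card_iff_nontrivial.mpr hP'
      rw [f₀_of_two_le hcard]
      exact hinsert P hcard
  have hclosed : ∀ P : Finset ι, P.Nonempty → (t + 1) * f₀ P = t * ∑ i ∈ P, c i + ∑ i, c i :=
    add_one_mul_eq_of_sum_insert (fun _ _ hPQ hP => Finset.Nonempty.mono hPQ hP) ht hrec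
  have hc : ∀ i, c i = 0 := by
    refine eq_zero_of_mul_add_sum_eq_zero (by simpa using ht 0) (ht _) fun i => ?_
    simpa [f₀_singleton] using (hclosed {i} (singleton_nonempty i)).symm
  refine ⟨hc, fun P hP => ?_⟩
  have hfP : (t + 1) * f P = 0 := by
    simpa [f₀_of_two_le hP, hc] using hclosed P (card_pos.mp (by lia))
  exact (mul_eq_zero_iff_left (by simpa using ht 1)).mp hfP

end Recursion

theorem two_mul_sub_two_add_ne_zero {R : Type*} [Ring R] [CharZero R] {m : ℕ} (hm : 2 ≤ m)
    (k : ℕ) : 2 * (m : R) - 2 + k ≠ 0 := by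
  have hcast : 2 * (m : R) - 2 + k = ((2 * m - 2 + k : ℕ) : R) := by
    rw [Nat.cast_add, Nat.cast_sub (by lia), Nat.cast_mul, Nat.cast_ofNat]
  rw [hcast]
  exact Nat.cast_ne_zero.mpr (by lia)

theorem stmt_8_general {ι K : Type*} [Fintype ι] [DecidableEq ι] [Field K] [CharZero K]
    (g : ℕ) (hg : 3 ≤ g) (a b : K) (c : ι → K) (e : ℕ → Finset ι → K)
    (hsym : ∀ h ≤ g, ∀ P : Finset ι, e h P = e (g - h) Pᶜ)
    (h1 : ∀ i : ι, (2 * (g : K) - 2) * c i + ∑ j ∈ univ \ {i}, e 0 {i, j} = 0)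
    (h2 : ∀ P : Finset ι, 2 ≤ #P →
      (2 * (g : K) - 2) * ∑ i ∈ P, c i + (2 - 2 * (g : K) - #Pᶜ) * e 0 P
        + ∑ j ∈ Pᶜ, e 0 (insert j P) = 0)
    (h3 : ∀ (h : ℕ) (P : Finset ι), 1 ≤ h → 2 * h ≤ g →
      ∑ i ∈ Pᶜ, c i + (2 - 2 * ((g : K) - h) - #Pᶜ) * e h P
        + ∑ j ∈ Pᶜ, e h (insert j P) = 0)
    (h4 : a / 24 + b / 2 - e 1 ∅ / 24 = 0)
    (h5 : e 1 ∅ - b = 0) :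
    a = 0 ∧ b = 0 ∧ (∀ i, c i = 0) ∧
    ∀ (h : ℕ) (P : Finset ι), h ≤ g → (h = 0 → 2 ≤ #P) → (h = g → 2 ≤ #Pᶜ) → e h P = 0 := by
  obtain ⟨hc, he_zero⟩ := eq_zero_of_sum_pair_of_sum_insert
    (two_mul_sub_two_add_ne_zero (by lia)) h1 fun P hP => by linear_combination h2 P hP
  have he_low (h : ℕ) (P : Finset ι) (hpos : 1 ≤ h) (hle : 2 * h ≤ g) : e h P = 0 := by
    refine eq_zero_of_mul_eq_sum_insert isUpperSet_univ
      (fun P _ => two_mul_sub_two_add_ne_zero (m := g - h) (by lia) #Pᶜ)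
      (fun P _ => ?_) P (Set.mem_univ P)
    have hrel := h3 h P hpos hle
    simp only [hc, sum_const_zero, zero_add] at hrel
    rw [Nat.cast_sub (by lia : h ≤ g)]
    linear_combination -hrel
  have he_one : e 1 ∅ = 0 := he_low 1 ∅ le_rfl (by lia)
  have hb : b = 0 := by linear_combination he_one - h5
  have ha : a = 0 := by linear_combination 24 * h4 - 12 * hb + he_one
  have he_half (h : ℕ) (P : Finset ι) (hle : 2 * h ≤ g) (hP : h = 0 → 2 ≤ #P) : e h P = 0 := by
    obtain rfl | hpos := h.eq_zero_or_pos
    exacts [he_zero P (hP rfl), he_low h P hpos hle]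
  refine ⟨ha, hb, hc, fun h P hhg hP hPc => ?_⟩
  obtain hle | hlt := le_or_gt (2 * h) g
  · exact he_half h P hle hP
  · rw [hsym h hhg]
    exact he_half (g - h) Pᶜ (by lia) fun h0 => hPc (by lia)

/-- No nonzero divisor class `a·λ₁ + b·δ_irr + Σ cᵢ Kᵢ + Σ e(h,P) δ_h^P` pairs to zero
with all the test curves `Zᵢ`, `Z_h^P`, `E`, `Z_irr`. -/
theorem stmt_8 (g n : ℕ) (hg : 3 ≤ g) (hn : 1 ≤ n)
    (a b : ℚ) (c : Fin n → ℚ) (e : ℕ → Finset (Fin n) → ℚ)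
    (hsym : ∀ h ≤ g, ∀ P : Finset (Fin n), e h P = e (g - h) Pᶜ)
    (h1 : ∀ i : Fin n,
      (2*(g:ℚ) - 2) * c i + ∑ j ∈ univ \ {i}, e 0 {i, j} = 0)
    (h2 : ∀ P : Finset (Fin n), 2 ≤ P.card →
      (2*(g:ℚ) - 2) * ∑ i ∈ P, c i
        + (2 - 2*(g:ℚ) - ((n:ℚ) - (P.card : ℚ))) * e 0 P
        + ∑ j ∈ Pᶜ, e 0 (insert j P) = 0)
    (h3 : ∀ (h : ℕ) (P : Finset (Fin n)), 1 ≤ h → h ≤ g - 1 →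
      ¬(h = g - 1 ∧ P = univ) →
      ∑ i ∈ Pᶜ, c i
        + (2 - 2*((g:ℚ) - (h:ℚ)) - ((n:ℚ) - (P.card : ℚ))) * e h P
        + ∑ j ∈ Pᶜ, e h (insert j P) = 0)
    (h4 : a / 24 + b / 2 - e 1 ∅ / 24 = 0)
    (h5 : e 1 ∅ - b = 0) :
    a = 0 ∧ b = 0 ∧ (∀ i, c i = 0) ∧
    ∀ (h : ℕ) (P : Finset (Fin n)), h ≤ g → (h = 0 → 2 ≤ P.card) →
      (h = g → 2 ≤ Pᶜ.card) → e h P = 0 :=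
  stmt_8_general g hg a b c e hsym h1
    (fun P hP => by simpa only [cast_card_compl, Fintype.card_fin] using h2 P hP)
    (fun h P hpos hle => by
      simpa only [cast_card_compl, Fintype.card_fin] using h3 h P hpos (by lia) (by lia))
    h4 h5
end

section
/- Let g ≥ 3 and n ≥ 1 be integers and let d_1,…,d_n be integers with d_1+⋯+d_n = g−1. Consider rational numbers c_1,…,c_n, and a rational number e(h,P) for every pair (h,P) with 0 ≤ h ≤ g and P ⊆ {1,…,n} such that |P| ≥ 2 if h = 0 and |P^c| ≥ 2 if h = g, satisfying the symmetry e(h,P) = e(g−h,P^c). Then the system of linear equations — (i) for every i ∈ {1,…,n}: (2g−2)·c_i + Σ_{j≠i} e(0,{i,j}) = g·d_i²; (ii) for every P ⊆ {1,…,n} with |P| ≥ 2: (2g−2)·Σ_{i∈P} c_i + (2 − 2g − (n−|P|))·e(0,P) + Σ_{j∉P} e(0,P∪{j}) = g·d_P²; (iii) for every pair (h,P) with 1 ≤ h ≤ g−1, P ⊆ {1,…,n}, and (h,P) ≠ (g−1,{1,…,n}): Σ_{i∉P} c_i + (2 − 2(g−h) − (n−|P|))·e(h,P) + Σ_{j∉P}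 e(h,P∪{j}) = (g−h)·(d_P−h)² — has exactly one solution, namely c_i = d_i(d_i+1)/2 for all i, e(0,P) = −(d_P² − Σ_{i∈P} d_i²)/2, and e(h,P) = −(d_P−h)(d_P−h+1)/2 for 1 ≤ h ≤ g−1 (with e(g,P) = e(0,P^c) determined by symmetry). -/
open Finset

/-!
Write `Δ` for the operator `(Δ F)(P) = ∑_{j ∉ P} (F(P ∪ {j}) - F(P))`. Its eigenvalues are
nonpositive integers, so `Δ F = a F` on an upper set forces `F = 0` there when `a > 0`.
The equation of `Z_h^P` reads `∑_{i ∉ P} c_i + (Δ - (2(g-h) - 2)) e(h,P) = (g-h) (d_P - h)²`, and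
the equation of `Z_0^P` takes this same shape for `e(0,P) - ∑_{i ∈ P} c_i`.

Consider the homogeneous system. Since `P ↦ ∑_{i ∉ P} c_i` is an eigenfunction of `Δ` for the
eigenvalue `-1`, for `g - h ≥ 2` we get `(2(g-h) - 1) e(h,P) = ∑_{i ∉ P} c_i`. At `h = g - 1` the
operator `Δ - 0` is not injective, but the symmetry with `h = 1` gives
`(2g - 3) e(g-1,P) = ∑_{i ∈ P} c_i`, and the equation of `Z_{g-1}^P` becomes
`(2g - 2) ∑_{i ∉ P} c_i = 0`. Hence `c = 0`, and the `e(h,P)` with `0 < h < g` vanish; then so do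
the `e(0,P)` with `|P| ≥ 2`.
-/

section UpLaplacian

variable {ι R : Type*} [Fintype ι] [DecidableEq ι] [CommRing R]

/-- The operator `Δ` on functions on the Boolean lattice of `ι` which sums the increments of a
function along the upward edges at a set. -/
def upLaplacian (F : Finset ι → R) (P : Finset ι) : R :=
  ∑ j ∈ Pᶜ, (F (insert j P) - F P)

lemma upLaplacian_eq_sum_sub (F : Finset ι → R) (P : Finset ι) :
    upLaplacian F P = ∑ j ∈ Pᶜ, F (insert j P) - (Fintype.card ι - #P) * F P := by
  rw [upLaplacian, sum_sub_distrib, sum_const, nsmul_eq_mul, card_compl,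
    Nat.cast_sub (card_le_univ P)]

lemma upLaplacian_sub (F G : Finset ι → R) (P : Finset ι) :
    upLaplacian (F - G) P = upLaplacian F P - upLaplacian G P := by
  simp only [upLaplacian, Pi.sub_apply, ← sum_sub_distrib]
  exact sum_congr rfl fun j _ => by ring

lemma upLaplacian_const_mul (a : R) (F : Finset ι → R) (P : Finset ι) :
    upLaplacian (fun Q => a * F Q) P = a * upLaplacian F P := by
  simp only [upLaplacian, mul_sum, mul_sub]

lemma upLaplacian_sum (c : ι → R) (P : Finset ι) :
    upLaplacian (fun Q => ∑ i ∈ Q, c i) P = ∑ i ∈ Pᶜ, c i :=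
  sum_congr rfl fun j hj => by simp only [sum_insert (mem_compl.mp hj), add_sub_cancel_right]

lemma upLaplacian_sum_compl (c : ι → R) (P : Finset ι) :
    upLaplacian (fun Q => ∑ i ∈ Qᶜ, c i) P = -∑ i ∈ Pᶜ, c i := by
  rw [upLaplacian, ← sum_neg_distrib]
  refine sum_congr rfl fun j hj => ?_
  rw [compl_insert, ← add_sum_erase _ _ hj, sub_add_cancel_right]

variable [NoZeroDivisors R]

lemma eq_zero_of_upLaplacian_eq_mul {S : Set (Finset ι)} (hS : IsUpperSet S) {a : R}
    (ha : ∀ m : ℕ, a + m ≠ 0) {F : Finset ι → R} (hF : ∀ P ∈ S, upLaplacian F P = a * F P)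
    {P : Finset ι} (hP : P ∈ S) : F P = 0 := by
  induction P using WellFoundedGT.induction with
  | ind P ih =>
    have insert_eq_zero : ∀ j ∈ Pᶜ, F (insert j P) = 0 := fun j hj =>
      ih _ (ssubset_insert (mem_compl.mp hj)) (hS (subset_insert j P) hP)
    have laplacian_eq : upLaplacian F P = -(#Pᶜ * F P) := by
      rw [upLaplacian, sum_sub_distrib, sum_eq_zero insert_eq_zero, sum_const, nsmul_eq_mul,
        zero_sub]
    have mul_eq : (a + (#Pᶜ : ℕ)) * F P = 0 := by
      linear_combination laplacian_eq - hF P hP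
    exact (mul_eq_zero.mp mul_eq).resolve_left (ha _)

end UpLaplacian

section TestCurves

variable {ι R : Type*} [Fintype ι] [DecidableEq ι] [CommRing R]

/-- The intersection number of the test curve `Z_h^P`, `h > 0`, with a class having coefficient
`c i` at `K_i` and `F Q` at `δ_h^Q`. The parameter `r` is the complementary genus `g - h`. -/
def testCurveDegree (r : R) (c : ι → R) (F : Finset ι → R) (P : Finset ι) : R :=
  ∑ i ∈ Pᶜ, c i + (2 - 2 * r - (Fintype.card ι - #P)) * F P + ∑ j ∈ Pᶜ, F (insert j P)

/-- The intersection number of the test curve `Z_0^P` in genus `g` with a class having coefficient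
`c i` at `K_i` and `F Q` at `δ_0^Q`. -/
def testCurveZeroDegree (g : R) (c : ι → R) (F : Finset ι → R) (P : Finset ι) : R :=
  (2 * g - 2) * ∑ i ∈ P, c i + (2 - 2 * g - (Fintype.card ι - #P)) * F P
    + ∑ j ∈ Pᶜ, F (insert j P)

lemma testCurveDegree_eq_upLaplacian (r : R) (c : ι → R) (F : Finset ι → R) (P : Finset ι) :
    testCurveDegree r c F P = ∑ i ∈ Pᶜ, c i + (upLaplacian F P - (2 * r - 2) * F P) := by
  rw [testCurveDegree, upLaplacian_eq_sum_sub]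
  ring

lemma testCurveDegree_sub (r : R) (c c' : ι → R) (F F' : Finset ι → R) (P : Finset ι) :
    testCurveDegree r (c - c') (F - F') P =
      testCurveDegree r c F P - testCurveDegree r c' F' P := by
  simp only [testCurveDegree_eq_upLaplacian, upLaplacian_sub, Pi.sub_apply, sum_sub_distrib]
  ring

lemma testCurveDegree_sub_sum (g : R) (c : ι → R) (F : Finset ι → R) (P : Finset ι) :
    testCurveDegree g c (fun Q => F Q - ∑ i ∈ Q, c i) P = testCurveZeroDegree g c F P := by
  have laplacian_eq := upLaplacian_sub F (fun Q => ∑ i ∈ Q, c i) P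
  rw [upLaplacian_sum, upLaplacian_eq_sum_sub F] at laplacian_eq
  rw [testCurveDegree_eq_upLaplacian, testCurveZeroDegree]
  linear_combination laplacian_eq

lemma testCurveZeroDegree_singleton (g : R) (c : ι → R) {F : Finset ι → R} {i : ι}
    (hF : F {i} = 0) :
    testCurveZeroDegree g c F {i} = (2 * g - 2) * c i + ∑ j ∈ univ \ {i}, F {i, j} := by
  simp only [testCurveZeroDegree, sum_singleton, hF, mul_zero, add_zero, compl_eq_univ_sdiff,
    pair_comm i]

variable [NoZeroDivisors R]

lemma mul_eq_sum_compl_of_testCurveDegree_eq_zero {S : Set (Finset ι)} (hS : IsUpperSet S)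
    {r : R} (hr : ∀ m : ℕ, 2 * r - 2 + m ≠ 0) {c : ι → R} {F : Finset ι → R}
    (hF : ∀ P ∈ S, testCurveDegree r c F P = 0) {P : Finset ι} (hP : P ∈ S) :
    (2 * r - 1) * F P = ∑ i ∈ Pᶜ, c i := by
  let G : Finset ι → R := (fun Q => (2 * r - 1) * F Q) - fun Q => ∑ i ∈ Qᶜ, c i
  have hG : ∀ Q ∈ S, upLaplacian G Q = (2 * r - 2) * G Q := fun Q hQ => by
    have degree_eq := hF Q hQ
    rw [testCurveDegree_eq_upLaplacian] at degree_eq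
    simp only [G, upLaplacian_sub, upLaplacian_const_mul, upLaplacian_sum_compl, Pi.sub_apply]
    linear_combination (2 * r - 1) * degree_eq
  exact sub_eq_zero.mp (eq_zero_of_upLaplacian_eq_mul hS hr hG hP)

lemma eqOn_of_testCurveDegree_eq {S : Set (Finset ι)} (hS : IsUpperSet S) {r : R}
    (hr : ∀ m : ℕ, 2 * r - 2 + m ≠ 0) {c : ι → R} {F F' : Finset ι → R}
    (hFF' : ∀ P ∈ S, testCurveDegree r c F P = testCurveDegree r c F' P) : Set.EqOn F F' S := by
  intro P hP
  have mul_eq : (2 * r - 1) * (F - F') P = ∑ i ∈ Pᶜ, (c - c) i :=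
    mul_eq_sum_compl_of_testCurveDegree_eq_zero hS hr
      (fun Q hQ => by rw [testCurveDegree_sub, hFF' Q hQ, sub_self]) hP
  have hr1 : 2 * r - 1 ≠ 0 := fun h => hr 1 (by linear_combination h)
  simp only [sub_self, sum_const_zero, Pi.sub_apply] at mul_eq
  exact sub_eq_zero.mp ((mul_eq_zero.mp mul_eq).resolve_left hr1)

lemma eq_zero_of_testCurveDegree_one_eq_zero {r : R} (hr : ∀ m : ℕ, 2 * r - 2 + m ≠ 0)
    {c : ι → R} {F G : Finset ι → R} (hGF : ∀ P, G P = F Pᶜ)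
    (hF : ∀ P, testCurveDegree r c F P = 0)
    (hG : ∀ P ≠ univ, testCurveDegree 1 c G P = 0) : c = 0 ∧ G = 0 := by
  have mul_G_eq (P : Finset ι) : (2 * r - 1) * G P = ∑ i ∈ P, c i := by
    rw [hGF, mul_eq_sum_compl_of_testCurveDegree_eq_zero isUpperSet_univ hr (fun Q _ => hF Q)
      (Set.mem_univ Pᶜ), compl_compl]
  have hr1 : 2 * r - 1 ≠ 0 := fun h => hr 1 (by linear_combination h)
  have hr2 : 2 * r ≠ 0 := fun h => hr 2 (by push_cast; linear_combination h)
  have hc : c = 0 := by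
    ext i
    have laplacian_eq : (2 * r - 1) * upLaplacian G {i}ᶜ = c i := by
      rw [← upLaplacian_const_mul, funext mul_G_eq, upLaplacian_sum, compl_compl, sum_singleton]
    have degree_eq := hG {i}ᶜ (by simp [compl_eq_univ_iff])
    rw [testCurveDegree_eq_upLaplacian, compl_compl, sum_singleton] at degree_eq
    have mul_eq : 2 * r * c i = 0 := by
      linear_combination (2 * r - 1) * degree_eq - laplacian_eq
    exact (mul_eq_zero.mp mul_eq).resolve_left hr2
  refine ⟨hc, funext fun P => ?_⟩
  have mul_eq := mul_G_eq P
  simp only [hc, Pi.zero_apply, sum_const_zero] at mul_eq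
  exact (mul_eq_zero.mp mul_eq).resolve_left hr1

end TestCurves

section ThetaDivisor

variable {ι K : Type*} [Field K] (d : ι → K)

/-- The coefficient of `[s_d^*Θ]` at `K_i`. -/
def thetaKCoeff (i : ι) : K := d i * (d i + 1) / 2

/-- The coefficient of `[s_d^*Θ]` at `δ_0^P`. -/
def thetaDeltaZeroCoeff (P : Finset ι) : K := -((∑ i ∈ P, d i) ^ 2 - ∑ i ∈ P, d i ^ 2) / 2

/-- The coefficient of `[s_d^*Θ]` at `δ_h^P` for `h > 0`. The value at `h = 0` is not the
coefficient at `δ_0^P`, see `thetaDeltaZeroCoeff_sub_sum`. -/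
def thetaDeltaCoeff (h : K) (P : Finset ι) : K :=
  -((∑ i ∈ P, d i - h) * (∑ i ∈ P, d i - h + 1)) / 2

lemma thetaDeltaZeroCoeff_singleton (i : ι) : thetaDeltaZeroCoeff d {i} = 0 := by
  simp [thetaDeltaZeroCoeff]

lemma thetaDeltaZeroCoeff_sub_sum (P : Finset ι) :
    thetaDeltaZeroCoeff d P - ∑ i ∈ P, thetaKCoeff d i = thetaDeltaCoeff d 0 P := by
  simp only [thetaDeltaZeroCoeff, thetaKCoeff, thetaDeltaCoeff, ← sum_div, mul_add, mul_one,
    sum_add_distrib, ← pow_two]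
  ring

variable [Fintype ι] [DecidableEq ι] {d} {g : K}

lemma sum_compl_of_sum_eq (hd : ∑ i, d i = g - 1) (P : Finset ι) :
    ∑ i ∈ Pᶜ, d i = g - 1 - ∑ i ∈ P, d i := by
  rw [← hd, ← sum_add_sum_compl P d, add_sub_cancel_left]

lemma thetaDeltaCoeff_compl (hd : ∑ i, d i = g - 1) (h : K) (P : Finset ι) :
    thetaDeltaCoeff d h Pᶜ = thetaDeltaCoeff d (g - h) P := by
  rw [thetaDeltaCoeff, thetaDeltaCoeff, sum_compl_of_sum_eq hd]
  ring

variable [CharZero K]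

lemma upLaplacian_thetaDeltaCoeff (h : K) (P : Finset ι) :
    upLaplacian (thetaDeltaCoeff d h) P =
      -((∑ i ∈ P, d i - h) * ∑ i ∈ Pᶜ, d i) - ∑ i ∈ Pᶜ, thetaKCoeff d i := by
  rw [mul_sum, ← sum_neg_distrib, ← sum_sub_distrib]
  refine sum_congr rfl fun j hj => ?_
  rw [thetaDeltaCoeff, thetaDeltaCoeff, thetaKCoeff, sum_insert (mem_compl.mp hj)]
  ring

lemma testCurveDegree_theta (hd : ∑ i, d i = g - 1) (h : K) (P : Finset ι) :
    testCurveDegree (g - h) (thetaKCoeff d) (thetaDeltaCoeff d h) P =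
      (g - h) * (∑ i ∈ P, d i - h) ^ 2 := by
  rw [testCurveDegree_eq_upLaplacian, upLaplacian_thetaDeltaCoeff, sum_compl_of_sum_eq hd,
    thetaDeltaCoeff]
  ring

lemma testCurveZeroDegree_theta (hd : ∑ i, d i = g - 1) (P : Finset ι) :
    testCurveZeroDegree g (thetaKCoeff d) (thetaDeltaZeroCoeff d) P =
      g * (∑ i ∈ P, d i) ^ 2 := by
  rw [← testCurveDegree_sub_sum, funext (thetaDeltaZeroCoeff_sub_sum d)]
  simpa only [sub_zero] using testCurveDegree_theta hd 0 P

end ThetaDivisor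

section Uniqueness

variable {ι K : Type*} [Fintype ι] [DecidableEq ι] [Field K] [CharZero K]

lemma two_mul_sub_two_add_natCast_ne_zero {r : ℕ} (hr : 2 ≤ r) (m : ℕ) :
    2 * (r : K) - 2 + m ≠ 0 := by
  obtain ⟨k, rfl⟩ := Nat.exists_eq_add_of_le hr
  have : ((2 + 2 * k + m : ℕ) : K) ≠ 0 := Nat.cast_ne_zero.mpr (by omega)
  push_cast at this ⊢
  convert this using 1
  ring

lemma eq_zero_of_testCurveDegree_eq_zero {g : ℕ} (hg : 3 ≤ g) {c : ι → K}
    {e : ℕ → Finset ι → K} (hsym : ∀ P, e (g - 1) P = e 1 Pᶜ)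
    (he : ∀ h P, 1 ≤ h → h ≤ g - 1 → ¬(h = g - 1 ∧ P = univ) →
      testCurveDegree ((g : K) - h) c (e h) P = 0) :
    c = 0 ∧ ∀ h, 1 ≤ h → h ≤ g - 1 → e h = 0 := by
  have coeff_ne_zero {h : ℕ} (hh : h + 2 ≤ g) (m : ℕ) : 2 * ((g : K) - h) - 2 + m ≠ 0 := by
    rw [← Nat.cast_sub (by omega)]
    exact two_mul_sub_two_add_natCast_ne_zero (by omega) m
  obtain ⟨hc, he_last⟩ : c = 0 ∧ e (g - 1) = 0 :=
    eq_zero_of_testCurveDegree_one_eq_zero (coeff_ne_zero (by omega)) hsym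
      (fun P => he 1 P le_rfl (by omega) (by omega))
      (fun P hP => by
        have degree_eq := he (g - 1) P (by omega) le_rfl (fun h => hP h.2)
        rwa [Nat.cast_pred (by omega), sub_sub_cancel] at degree_eq)
  refine ⟨hc, fun h hh1 hhg => ?_⟩
  obtain rfl | hlt := hhg.eq_or_lt
  · exact he_last
  have hzero (P : Finset ι) : testCurveDegree ((g : K) - h) c 0 P = 0 := by
    simp [testCurveDegree, hc]
  exact funext fun P => eqOn_of_testCurveDegree_eq isUpperSet_univ (coeff_ne_zero (by omega))
    (fun Q _ => (he h Q hh1 hhg (by omega)).trans (hzero Q).symm) (Set.mem_univ P)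

lemma eq_theta_of_testCurveDegree_eq {g : ℕ} (hg : 3 ≤ g) {d : ι → K}
    (hd : ∑ i, d i = (g : K) - 1) {c : ι → K} {e : ℕ → Finset ι → K}
    (hsym : ∀ P, e (g - 1) P = e 1 Pᶜ)
    (he : ∀ (h : ℕ) P, 1 ≤ h → h ≤ g - 1 → ¬(h = g - 1 ∧ P = univ) →
      testCurveDegree ((g : K) - h) c (e h) P = ((g : K) - h) * (∑ i ∈ P, d i - h) ^ 2) :
    c = thetaKCoeff d ∧ ∀ h : ℕ, 1 ≤ h → h ≤ g - 1 → e h = thetaDeltaCoeff d h := by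
  have hsym_theta (P : Finset ι) :
      thetaDeltaCoeff d ((g - 1 : ℕ) : K) P = thetaDeltaCoeff d ((1 : ℕ) : K) Pᶜ := by
    rw [thetaDeltaCoeff_compl hd, Nat.cast_pred (by omega), Nat.cast_one]
  obtain ⟨hc, he_sub⟩ := eq_zero_of_testCurveDegree_eq_zero hg (c := c - thetaKCoeff d)
    (e := fun h => e h - thetaDeltaCoeff d h)
    (fun P => by simp only [Pi.sub_apply, hsym, hsym_theta])
    (fun h P hh1 hhg hne => by
      rw [testCurveDegree_sub, he h P hh1 hhg hne, testCurveDegree_theta hd, sub_self])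
  exact ⟨sub_eq_zero.mp hc, fun h hh1 hhg => sub_eq_zero.mp (he_sub h hh1 hhg)⟩

lemma eq_thetaDeltaZeroCoeff_of_testCurveZeroDegree_eq {g : ℕ} (hg : 2 ≤ g) {d : ι → K}
    (hd : ∑ i, d i = (g : K) - 1) {F : Finset ι → K} {S : Set (Finset ι)} (hS : IsUpperSet S)
    (hF : ∀ P ∈ S, testCurveZeroDegree (g : K) (thetaKCoeff d) F P = g * (∑ i ∈ P, d i) ^ 2) :
    Set.EqOn F (thetaDeltaZeroCoeff d) S := by
  intro P hP
  have shifted_eq : Set.EqOn (fun Q => F Q - ∑ i ∈ Q, thetaKCoeff d i)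
      (fun Q => thetaDeltaZeroCoeff d Q - ∑ i ∈ Q, thetaKCoeff d i) S :=
    eqOn_of_testCurveDegree_eq hS (two_mul_sub_two_add_natCast_ne_zero hg) fun Q hQ => by
      rw [testCurveDegree_sub_sum, testCurveDegree_sub_sum, hF Q hQ, testCurveZeroDegree_theta hd]
  exact sub_left_injective (shifted_eq hP)

end Uniqueness

theorem stmt_10_general {ι K : Type*} [Fintype ι] [DecidableEq ι] [Field K] [CharZero K]
    {g : ℕ} (hg : 3 ≤ g) {d : ι → K} (hd : ∑ i, d i = (g : K) - 1) {c : ι → K}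
    {e : ℕ → Finset ι → K} (hsym : ∀ P, e (g - 1) P = e 1 Pᶜ) :
    ((∀ i, (2 * (g : K) - 2) * c i + ∑ j ∈ univ \ {i}, e 0 {i, j} = g * d i ^ 2) ∧
      (∀ P, 2 ≤ #P → testCurveZeroDegree (g : K) c (e 0) P = g * (∑ i ∈ P, d i) ^ 2) ∧
      (∀ (h : ℕ) P, 1 ≤ h → h ≤ g - 1 → ¬(h = g - 1 ∧ P = univ) →
        testCurveDegree ((g : K) - h) c (e h) P = ((g : K) - h) * (∑ i ∈ P, d i - h) ^ 2)) ↔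
    ((∀ i, c i = thetaKCoeff d i) ∧
      (∀ P, 2 ≤ #P → e 0 P = thetaDeltaZeroCoeff d P) ∧
      (∀ (h : ℕ) P, 1 ≤ h → h ≤ g - 1 → e h P = thetaDeltaCoeff d h P)) := by
  have hupper : IsUpperSet {P : Finset ι | 2 ≤ #P} := fun _ _ hPQ hP =>
    hP.trans (card_le_card hPQ)
  constructor
  · rintro ⟨-, hzero, hpos⟩
    obtain ⟨rfl, he⟩ := eq_theta_of_testCurveDegree_eq hg hd hsym hpos
    have he_zero := eq_thetaDeltaZeroCoeff_of_testCurveZeroDegree_eq (by omega) hd hupper hzero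
    exact ⟨fun _ => rfl, fun _ hP => he_zero hP, fun h P hh1 hhg => congrFun (he h hh1 hhg) P⟩
  · rintro ⟨hc, hzero, hpos⟩
    obtain rfl : c = thetaKCoeff d := funext hc
    refine ⟨fun i => ?_, fun P hP => ?_, fun h P hh1 hhg _ => ?_⟩
    · have he_pair : ∀ j ∈ univ \ {i}, e 0 {i, j} = thetaDeltaZeroCoeff d {i, j} := fun j hj =>
        hzero _ (card_pair fun hij => by simp [hij] at hj).ge
      rw [sum_congr rfl he_pair,
        ← testCurveZeroDegree_singleton _ _ (thetaDeltaZeroCoeff_singleton d i),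
        testCurveZeroDegree_theta hd, sum_singleton]
    · rw [← testCurveZeroDegree_theta hd P, testCurveZeroDegree, testCurveZeroDegree, hzero P hP,
        sum_congr rfl fun j _ => hzero _ (hupper (subset_insert j P) hP)]
    · rw [funext fun Q => hpos h Q hh1 hhg, testCurveDegree_theta hd]

/-- Combinatorial form of the `Kᵢ`- and `δ_h^P`-coefficients of the main theorem in
degree `g−1`: the system of intersection equations with the test curves `Zᵢ`, `Z_h^P`
has the coefficients of `[s_d^*Θ]` as its unique solution. -/
theorem stmt_10 (g n : ℕ) (hg : 3 ≤ g) (hn : 1 ≤ n) (d : Fin n → ℤ)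
    (hd : ∑ i, d i = (g : ℤ) - 1)
    (c : Fin n → ℚ) (e : ℕ → Finset (Fin n) → ℚ)
    (hsym : ∀ h ≤ g, ∀ P : Finset (Fin n), e h P = e (g - h) Pᶜ) :
    ((∀ i : Fin n,
        (2*(g:ℚ) - 2) * c i + ∑ j ∈ univ \ {i}, e 0 {i, j}
          = (g:ℚ) * (d i : ℚ)^2) ∧
     (∀ P : Finset (Fin n), 2 ≤ P.card →
        (2*(g:ℚ) - 2) * ∑ i ∈ P, c i
          + (2 - 2*(g:ℚ) - ((n:ℚ) - (P.card : ℚ))) * e 0 P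
          + ∑ j ∈ Pᶜ, e 0 (insert j P)
          = (g:ℚ) * (∑ i ∈ P, (d i : ℚ))^2) ∧
     (∀ (h : ℕ) (P : Finset (Fin n)), 1 ≤ h → h ≤ g - 1 →
        ¬(h = g - 1 ∧ P = univ) →
        ∑ i ∈ Pᶜ, c i
          + (2 - 2*((g:ℚ) - (h:ℚ)) - ((n:ℚ) - (P.card : ℚ))) * e h P
          + ∑ j ∈ Pᶜ, e h (insert j P)
          = ((g:ℚ) - (h:ℚ)) * ((∑ i ∈ P, (d i : ℚ)) - (h:ℚ))^2))
    ↔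
    ((∀ i : Fin n, c i = (d i : ℚ) * ((d i : ℚ) + 1) / 2) ∧
     (∀ P : Finset (Fin n), 2 ≤ P.card →
        e 0 P = -((∑ i ∈ P, (d i : ℚ))^2 - ∑ i ∈ P, (d i : ℚ)^2) / 2) ∧
     (∀ (h : ℕ) (P : Finset (Fin n)), 1 ≤ h → h ≤ g - 1 →
        e h P = -(((∑ i ∈ P, (d i : ℚ)) - (h:ℚ))
                  * ((∑ i ∈ P, (d i : ℚ)) - (h:ℚ) + 1)) / 2)) := by
  simpa only [testCurveZeroDegree, testCurveDegree, thetaKCoeff, thetaDeltaZeroCoeff,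
    thetaDeltaCoeff, Fintype.card_fin] using
    stmt_10_general hg (d := fun i => (d i : ℚ)) (by exact_mod_cast hd)
      (fun P => by rw [hsym 1 (by omega), compl_compl])
end
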